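/- Let ω > 0 and p > 1. Let u : ℝ² → ℝ be a smooth positive function, not identically zero, solving (QLS) pointwise on ℝ², and assume u and all its partial derivatives up to order two decay exponentially: there exist C, δ > 0 with |∂^α u(x)| ≤ C e^{−δ|x|} for every multi-index α with |α| ≤ 2 and every x ∈ ℝ². Then ∫_{ℝ²} (L₊u)(x)·u(x) dx = −2∫_{ℝ²} |∇u|² dx − ((p−1)²/(p+1))∫_{ℝ²} u^{p+1} dx, and in particular ∫_{ℝ²} (L₊u)·u dx < 0. -/

import Mathlib

open MeasureTheory Real Filter Topology

noncomputable section

/-- Partial derivative along the `i`-th coordinate direction. -/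
def pd {N : ℕ} {F : Type*} [NormedAddCommGroup F] [NormedSpace ℝ F]
    (i : Fin N) (f : EuclideanSpace ℝ (Fin N) → F) (x : EuclideanSpace ℝ (Fin N)) : F :=
  fderiv ℝ f x (EuclideanSpace.single i 1)

/-- Euclidean Laplacian. -/
def lap {N : ℕ} {F : Type*} [NormedAddCommGroup F] [NormedSpace ℝ F]
    (f : EuclideanSpace ℝ (Fin N) → F) (x : EuclideanSpace ℝ (Fin N)) : F :=
  ∑ i : Fin N, pd i (pd i f) x

/-- Squared norm of the gradient of a real-valued function: `|∇f|²`. -/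
def gradsq {N : ℕ} (f : EuclideanSpace ℝ (Fin N) → ℝ) (x : EuclideanSpace ℝ (Fin N)) : ℝ :=
  ∑ i : Fin N, (pd i f x) ^ 2

/-- A ground-state profile of the quasilinear Schrödinger equation (QLS)
`-Δu - uΔ(u²) + ωu - u^p = 0` on `ℝ^N`: smooth, positive, radially symmetric with a
strictly decreasing positive profile, solves (QLS) pointwise, and decays
exponentially together with all its derivatives. -/
structure IsGroundState (N : ℕ) (ω p : ℝ) (u : EuclideanSpace ℝ (Fin N) → ℝ) : Prop where
  smooth : ContDiff ℝ (⊤ : ℕ∞) u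
  pos : ∀ x, 0 < u x
  radial : ∃ U : ℝ → ℝ, StrictAntiOn U (Set.Ici 0) ∧ (∀ r, 0 ≤ r → 0 < U r) ∧
      ∀ x, u x = U ‖x‖
  solves : ∀ x, -lap u x - u x * lap (fun y => (u y) ^ 2) x + ω * u x - (u x) ^ p = 0
  decay : ∀ k : ℕ, ∃ C > 0, ∃ δ > 0, ∀ x,
      ‖iteratedFDeriv ℝ k u x‖ ≤ C * Real.exp (-δ * ‖x‖)

/-- The linearized operator `L₊` around `u` (real-valued functions). -/
def Lplus {N : ℕ} (ω p : ℝ) (u η : EuclideanSpace ℝ (Fin N) → ℝ)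
    (x : EuclideanSpace ℝ (Fin N)) : ℝ :=
  -lap η x - 2 * u x * lap (fun y => u y * η y) x + ω * η x
    - (lap (fun y => (u y) ^ 2) x + p * u x ^ (p - 1)) * η x

/-- The linearized operator `L₋` around `u`. -/
def Lminus {N : ℕ} (ω p : ℝ) (u ζ : EuclideanSpace ℝ (Fin N) → ℝ)
    (x : EuclideanSpace ℝ (Fin N)) : ℝ :=
  -lap ζ x + ω * ζ x - (lap (fun y => (u y) ^ 2) x + u x ^ (p - 1)) * ζ x


abbrev E2 := EuclideanSpace ℝ (Fin 2)

/-- continuous with exponential decay -/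
def Dec (f : E2 → ℝ) : Prop :=
  Continuous f ∧ ∃ C > 0, ∃ δ > 0, ∀ x, |f x| ≤ C * Real.exp (-δ * ‖x‖)

lemma Dec.neg {f : E2 → ℝ} (hf : Dec f) : Dec (fun x => -f x) := by
  obtain ⟨hc, C, hC, δ, hδ, h⟩ := hf
  exact ⟨hc.neg, C, hC, δ, hδ, fun x => by rw [abs_neg]; exact h x⟩

lemma Dec.const_mul {f : E2 → ℝ} (hf : Dec f) (c : ℝ) : Dec (fun x => c * f x) := by
  obtain ⟨hc, C, hC, δ, hδ, h⟩ := hf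
  refine ⟨by fun_prop, (|c| + 1) * C, by positivity, δ, hδ, fun x => ?_⟩
  rw [abs_mul, mul_assoc]
  have := h x
  gcongr
  linarith

lemma Dec.add {f g : E2 → ℝ} (hf : Dec f) (hg : Dec g) : Dec (fun x => f x + g x) := by
  obtain ⟨hc, C, hC, δ, hδ, h⟩ := hf
  obtain ⟨hc', C', hC', δ', hδ', h'⟩ := hg
  refine ⟨by fun_prop, C + C', by positivity, min δ δ', lt_min hδ hδ', fun x => ?_⟩
  have h1 : Real.exp (-δ * ‖x‖) ≤ Real.exp (-(min δ δ') * ‖x‖) := by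
    gcongr; exact min_le_left _ _
  have h2 : Real.exp (-δ' * ‖x‖) ≤ Real.exp (-(min δ δ') * ‖x‖) := by
    gcongr; exact min_le_right _ _
  have h3 := mul_le_mul_of_nonneg_left h1 hC.le
  have h4 := mul_le_mul_of_nonneg_left h2 hC'.le
  have := abs_add_le (f x) (g x)
  linarith [h x, h' x]

lemma Dec.sub {f g : E2 → ℝ} (hf : Dec f) (hg : Dec g) : Dec (fun x => f x - g x) := by
  simpa [sub_eq_add_neg] using hf.add hg.neg

lemma Dec.mul {f g : E2 → ℝ} (hf : Dec f) (hg : Dec g) : Dec (fun x => f x * g x) := by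
  obtain ⟨hc, C, hC, δ, hδ, h⟩ := hf
  obtain ⟨hc', C', hC', δ', hδ', h'⟩ := hg
  refine ⟨by fun_prop, C * C', by positivity, δ + δ', by positivity, fun x => ?_⟩
  rw [abs_mul, show -(δ + δ') * ‖x‖ = -δ * ‖x‖ + -δ' * ‖x‖ by ring, Real.exp_add]
  calc |f x| * |g x| ≤ (C * Real.exp (-δ * ‖x‖)) * (C' * Real.exp (-δ' * ‖x‖)) :=
        mul_le_mul (h x) (h' x) (abs_nonneg _) (by positivity)
    _ = _ := by ring

lemma Dec.coord_mul {f : E2 → ℝ} (hf : Dec f) (i : Fin 2) : Dec (fun x => x i * f x) := by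
  obtain ⟨hc, C, hC, δ, hδ, h⟩ := hf
  refine ⟨by fun_prop, 2 / δ * C, by positivity, δ / 2, by positivity, fun x => ?_⟩
  have h1 : |x i| ≤ ‖x‖ := by
    simpa using PiLp.norm_apply_le x i
  have h2 : ‖x‖ ≤ 2 / δ * Real.exp (δ / 2 * ‖x‖) := by
    have := Real.add_one_le_exp (δ / 2 * ‖x‖)
    calc ‖x‖ = 2 / δ * (δ / 2 * ‖x‖) := by field_simp
      _ ≤ _ := by gcongr; linarith
  rw [abs_mul]
  calc |x i| * |f x| ≤ (2 / δ * Real.exp (δ / 2 * ‖x‖)) * (C * Real.exp (-δ * ‖x‖)) :=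
        mul_le_mul (h1.trans h2) (h x) (abs_nonneg _) (by positivity)
    _ = 2 / δ * C * (Real.exp (δ / 2 * ‖x‖) * Real.exp (-δ * ‖x‖)) := by ring
    _ = _ := by rw [← Real.exp_add]; ring_nf

lemma Dec.rpow {f : E2 → ℝ} (hf : Dec f) (hpos : ∀ x, 0 < f x) {q : ℝ} (hq : 0 < q) :
    Dec (fun x => f x ^ q) := by
  obtain ⟨hc, C, hC, δ, hδ, h⟩ := hf
  refine ⟨hc.rpow_const (fun x => Or.inl (hpos x).ne'), C ^ q, by positivity, δ * q,
    by positivity, fun x => ?_⟩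
  have h0 := hpos x
  have := h x
  rw [abs_of_pos h0] at this
  rw [abs_of_pos (by positivity)]
  calc f x ^ q ≤ (C * Real.exp (-δ * ‖x‖)) ^ q := by gcongr
    _ = _ := by
      rw [Real.mul_rpow hC.le (Real.exp_pos _).le, ← Real.exp_mul]; ring_nf

lemma Dec.integrable {f : E2 → ℝ} (hf : Dec f) : Integrable f := by
  obtain ⟨hc, C, hC, δ, hδ, h⟩ := hf
  have hi : Integrable (fun x : E2 => (1 + ‖x‖) ^ (-(3:ℝ))) :=
    integrable_one_add_norm (by simp; norm_num)
  refine (hi.const_mul (C * (Real.exp δ * (6 / δ ^ 3)))).mono' hc.aestronglyMeasurable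
    (Filter.Eventually.of_forall fun x => ?_)
  rw [Real.norm_eq_abs]
  refine (h x).trans ?_
  rw [mul_assoc]
  gcongr
  have hn := norm_nonneg x
  have h1 : (δ * (1 + ‖x‖)) ^ 3 / (Nat.factorial 3 : ℝ) ≤ Real.exp (δ * (1 + ‖x‖)) :=
    Real.pow_div_factorial_le_exp _ (by positivity) 3
  have h6 : (Nat.factorial 3 : ℝ) = 6 := by norm_num [Nat.factorial]
  rw [h6] at h1
  have h2 : (1 + ‖x‖) ^ (-(3:ℝ)) = ((1 + ‖x‖) ^ 3)⁻¹ := by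
    rw [Real.rpow_neg (by positivity)]; norm_cast
  rw [h2]
  have h3 : Real.exp (-δ * ‖x‖) = Real.exp δ * (Real.exp (δ * (1 + ‖x‖)))⁻¹ := by
    rw [← Real.exp_neg, ← Real.exp_add]; ring_nf
  rw [h3, mul_assoc]
  gcongr
  calc (Real.exp (δ * (1 + ‖x‖)))⁻¹ ≤ ((δ * (1 + ‖x‖)) ^ 3 / 6)⁻¹ := by gcongr
    _ = _ := by field_simp

def HP (i : Fin 2) (f f' : E2 → ℝ) : Prop := Differentiable ℝ f ∧ ∀ x, pd i f x = f' x

lemma HP.add {i : Fin 2} {f f' g g' : E2 → ℝ} (hf : HP i f f') (hg : HP i g g') :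
    HP i (fun x => f x + g x) (fun x => f' x + g' x) := by
  refine ⟨hf.1.add hg.1, fun x => ?_⟩
  beta_reduce
  rw [← hf.2, ← hg.2]
  simp only [pd]
  rw [fderiv_fun_add (hf.1 x) (hg.1 x)]; rfl

lemma HP.sub {i : Fin 2} {f f' g g' : E2 → ℝ} (hf : HP i f f') (hg : HP i g g') :
    HP i (fun x => f x - g x) (fun x => f' x - g' x) := by
  refine ⟨hf.1.sub hg.1, fun x => ?_⟩
  beta_reduce
  rw [← hf.2, ← hg.2]
  simp only [pd]
  rw [fderiv_fun_sub (hf.1 x) (hg.1 x)]; rfl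

lemma HP.mul {i : Fin 2} {f f' g g' : E2 → ℝ} (hf : HP i f f') (hg : HP i g g') :
    HP i (fun x => f x * g x) (fun x => f' x * g x + f x * g' x) := by
  refine ⟨hf.1.mul hg.1, fun x => ?_⟩
  beta_reduce
  rw [← hf.2, ← hg.2]
  simp only [pd]
  rw [fderiv_fun_mul (hf.1 x) (hg.1 x)]
  simp [smul_eq_mul]; ring

lemma HP.const_mul {i : Fin 2} {f f' : E2 → ℝ} (hf : HP i f f') (c : ℝ) :
    HP i (fun x => c * f x) (fun x => c * f' x) := by
  refine ⟨hf.1.const_mul c, fun x => ?_⟩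
  beta_reduce
  rw [← hf.2]
  simp only [pd]
  rw [fderiv_const_mul (hf.1 x)]
  simp [smul_eq_mul]

lemma HP.coord (i j : Fin 2) : HP i (fun x => x j) (fun _ => if j = i then 1 else 0) := by
  have h : ∀ x : E2, HasFDerivAt (fun x : E2 => x j) (EuclideanSpace.proj j : E2 →L[ℝ] ℝ) x :=
    fun x => (EuclideanSpace.proj j : E2 →L[ℝ] ℝ).hasFDerivAt
  refine ⟨fun x => (h x).differentiableAt, fun x => ?_⟩
  simp only [pd]
  rw [(h x).fderiv]
  simp

lemma HP.rpow {i : Fin 2} {f f' : E2 → ℝ} (hf : HP i f f') (hpos : ∀ x, 0 < f x) (q : ℝ) :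
    HP i (fun x => f x ^ q) (fun x => q * f x ^ (q - 1) * f' x) := by
  have h : ∀ x, HasFDerivAt (fun x => f x ^ q) ((q * f x ^ (q - 1)) • fderiv ℝ f x) x :=
    fun x => (hf.1 x).hasFDerivAt.rpow_const (Or.inl (hpos x).ne')
  refine ⟨fun x => (h x).differentiableAt, fun x => ?_⟩
  beta_reduce
  rw [← hf.2]
  simp only [pd]
  rw [(h x).fderiv]
  simp

lemma HP.congr {i : Fin 2} {f f' g g' : E2 → ℝ} (hf : HP i f f') (h : ∀ x, g x = f x)
    (h' : ∀ x, g' x = f' x) : HP i g g' := by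
  rw [funext h, funext h']; exact hf

lemma HP.integral {i : Fin 2} {f f' : E2 → ℝ} (hf : HP i f f') (h : Dec f) (h' : Dec f') :
    ∫ x, f' x = 0 := by
  have e : ∀ x, fderiv ℝ f x (EuclideanSpace.single i 1) = f' x := hf.2
  have := integral_mul_fderiv_eq_neg_fderiv_mul_of_integrable (μ := (volume : Measure E2))
    (f := fun _ => (1:ℝ)) (g := f)
    (v := EuclideanSpace.single i 1) (by simp)
    (by simp only [e, one_mul]; exact h'.integrable) (by simpa using h.integrable)
    (fun x _ => differentiableAt_const _) (fun x _ => hf.1 x)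
  simpa [e] using this

lemma pd_contDiff {u : E2 → ℝ} (hsm : ContDiff ℝ (⊤ : ℕ∞) u) (i : Fin 2) :
    ContDiff ℝ (⊤ : ℕ∞) (pd i u) := by
  have h : ContDiff ℝ (⊤ : ℕ∞) (fderiv ℝ u) := hsm.fderiv_right (by simp)
  exact h.clm_apply contDiff_const

lemma pd_pd {u : E2 → ℝ} (hsm : ContDiff ℝ (⊤ : ℕ∞) u) (i j : Fin 2) (x : E2) :
    pd i (pd j u) x =
      fderiv ℝ (fderiv ℝ u) x (EuclideanSpace.single i 1) (EuclideanSpace.single j 1) := by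
  have h : ContDiff ℝ (⊤ : ℕ∞) (fderiv ℝ u) := hsm.fderiv_right (by simp)
  have hd : DifferentiableAt ℝ (fderiv ℝ u) x := (h.differentiable (by simp)) x
  change fderiv ℝ (fun y => fderiv ℝ u y (EuclideanSpace.single j 1)) x _ = _
  rw [fderiv_clm_apply hd (differentiableAt_const _)]
  simp

lemma pd_comm {u : E2 → ℝ} (hsm : ContDiff ℝ (⊤ : ℕ∞) u) (i j : Fin 2) (x : E2) :
    pd i (pd j u) x = pd j (pd i u) x := by
  rw [pd_pd hsm, pd_pd hsm]
  exact ((contDiff_infty.mp hsm 2).contDiffAt.isSymmSndFDerivAt (by simp)) _ _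

lemma HP.self {u : E2 → ℝ} (hsm : ContDiff ℝ (⊤ : ℕ∞) u) (i : Fin 2) : HP i u (pd i u) :=
  ⟨hsm.differentiable (by simp), fun _ => rfl⟩

lemma lap_sq {u : E2 → ℝ} (hsm : ContDiff ℝ (⊤ : ℕ∞) u) (x : E2) :
    lap (fun y => u y * u y) x = 2 * gradsq u x + 2 * u x * lap u x := by
  have h : ∀ i, pd i (pd i (fun y => u y * u y)) x
      = 2 * (pd i u x) ^ 2 + 2 * u x * pd i (pd i u) x := by
    intro i
    have hu := HP.self hsm i
    have h1 := funext (hu.mul hu).2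
    rw [h1]
    have hp := HP.self (pd_contDiff hsm i) i
    rw [((hp.mul hu).add (hu.mul hp)).2]
    ring
  simp only [lap, gradsq, Fin.sum_univ_two, h]
  ring

/-- In dimension 2, `∫ (L₊u)·u = −2 ∫ |∇u|² − ((p−1)²/(p+1)) ∫ u^{p+1} < 0`. -/
theorem stmt16 (ω p : ℝ) (hω : 0 < ω) (hp : 1 < p)
    (u : EuclideanSpace ℝ (Fin 2) → ℝ) (hsm : ContDiff ℝ (⊤ : ℕ∞) u) (hpos : ∀ x, 0 < u x)
    (hnz : ∃ x, u x ≠ 0)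
    (hsol : ∀ x, -lap u x - u x * lap (fun y => (u y) ^ 2) x + ω * u x - (u x) ^ p = 0)
    (hdec : ∃ C > 0, ∃ δ > 0, ∀ k : ℕ, k ≤ 2 → ∀ x,
      ‖iteratedFDeriv ℝ k u x‖ ≤ C * Real.exp (-δ * ‖x‖)) :
    (∫ x, Lplus ω p u u x * u x)
        = -2 * (∫ x, gradsq u x) - ((p - 1) ^ 2 / (p + 1)) * ∫ x, u x ^ (p + 1)
      ∧ (∫ x, Lplus ω p u u x * u x) < 0 := by
  obtain ⟨C, hC, δ, hδ, hd⟩ := hdec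
  have hp1 : p + 1 ≠ 0 := by linarith
  have Du : Dec u := ⟨hsm.continuous, C, hC, δ, hδ, fun x => by
    simpa using hd 0 (by norm_num) x⟩
  have Dp : ∀ i, Dec (pd i u) := fun i => ⟨(pd_contDiff hsm i).continuous, C, hC, δ, hδ,
    fun x => by
      have h1 := hd 1 (by norm_num) x
      rw [norm_iteratedFDeriv_one] at h1
      have h2 := (fderiv ℝ u x).le_opNorm (EuclideanSpace.single i 1)
      simp only [PiLp.norm_single, norm_one, mul_one] at h2
      exact h2.trans h1⟩
  have Dpp : ∀ i j, Dec (pd i (pd j u)) := fun i j =>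
    ⟨(pd_contDiff (pd_contDiff hsm j) i).continuous, C, hC, δ, hδ,
    fun x => by
      have h1 := hd 2 (by norm_num) x
      have h2 := (iteratedFDeriv ℝ 2 u x).le_opNorm
        ![EuclideanSpace.single i 1, EuclideanSpace.single j 1]
      rw [iteratedFDeriv_two_apply] at h2
      simp only [Fin.prod_univ_two, Matrix.cons_val_zero, Matrix.cons_val_one,
        PiLp.norm_single, norm_one, mul_one] at h2
      rw [pd_pd hsm]
      exact h2.trans h1⟩
  have DP := Du.rpow hpos (q := p + 1) (by linarith)
  have Dq := Du.rpow hpos (q := p) (by linarith)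
  set a := pd 0 u with ha
  set b := pd 1 u with hb
  have Da : Dec a := Dp 0
  have Db : Dec b := Dp 1
  have hu0 : HP 0 u a := HP.self hsm 0
  have hu1 : HP 1 u b := HP.self hsm 1
  have ha0 : HP 0 a (pd 0 a) := HP.self (pd_contDiff hsm 0) 0
  have ha1 : HP 1 a (pd 0 b) :=
    (HP.self (pd_contDiff hsm 0) 1).congr (fun _ => rfl) (fun x => pd_comm hsm 0 1 x)
  have hb0 : HP 0 b (pd 0 b) := HP.self (pd_contDiff hsm 1) 0
  have hb1 : HP 1 b (pd 1 b) := HP.self (pd_contDiff hsm 1) 1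
  have Da0 : Dec (pd 0 a) := Dpp 0 0
  have Db0 : Dec (pd 0 b) := Dpp 0 1
  have Db1 : Dec (pd 1 b) := Dpp 1 1
  clear_value a b
  -- twice the potential
  let G : E2 → ℝ := fun x => ω * (u x * u x) - 2 / (p + 1) * u x ^ (p + 1)
  let g : E2 → ℝ := fun x => 2 * (ω * u x - u x ^ p)
  have DG : Dec G := ((Du.mul Du).const_mul ω).sub (DP.const_mul _)
  have Dg : Dec g := ((Du.const_mul ω).sub Dq).const_mul 2
  have HG : ∀ (i : Fin 2) (c : E2 → ℝ), HP i u c → HP i G (fun x => g x * c x) := by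
    intro i c h
    refine (((h.mul h).const_mul ω).sub ((h.rpow hpos (p + 1)).const_mul (2 / (p + 1)))).congr
      (fun _ => rfl) (fun x => ?_)
    simp only [g, add_sub_cancel_right]
    field_simp
    ring
  -- Q c d = (1 + 2u²) c d
  have DQ : ∀ {c d : E2 → ℝ}, Dec c → Dec d →
      Dec (fun x => c x * d x + 2 * (u x * u x * (c x * d x))) := fun hc hd =>
    (hc.mul hd).add (((Du.mul Du).mul (hc.mul hd)).const_mul 2)
  have HQ : ∀ {i : Fin 2} {u' c c' d d' : E2 → ℝ}, HP i u u' → HP i c c' → HP i d d' →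
      HP i (fun x => c x * d x + 2 * (u x * u x * (c x * d x)))
        (fun x => ((c' x * d x + 2 * (u x * u x * (c' x * d x)))
          + (c x * d' x + 2 * (u x * u x * (c x * d' x)))) + 4 * ((u x * u' x) * (c x * d x))) := by
    intro i u' c c' d d' hu hc hd
    refine ((hc.mul hd).add (((hu.mul hu).mul (hc.mul hd)).const_mul 2)).congr (fun _ => rfl)
      (fun x => ?_)
    ring
  have DQ' : ∀ {u' c c' d d' : E2 → ℝ}, Dec u' → Dec c → Dec c' → Dec d → Dec d' →
      Dec (fun x => ((c' x * d x + 2 * (u x * u x * (c' x * d x)))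
          + (c x * d' x + 2 * (u x * u x * (c x * d' x))))
          + 4 * ((u x * u' x) * (c x * d x))) := by
    intro u' c c' d d' hu hc hc' hd hd'
    exact ((DQ hc' hd).add (DQ hc hd')).add (((Du.mul hu).mul (hc.mul hd)).const_mul 4)
  have I0 := HP.integral
    (((hu0.mul ha0).const_mul 2).add
      (((HP.coord 0 0).mul (((HQ hu0 ha0 ha0).sub (HQ hu0 hb0 hb0)).sub (HG 0 a hu0))).add
      ((HP.coord 0 1).mul ((HQ hu0 ha0 hb0).const_mul 2))))
    (((Du.mul Da).const_mul 2).add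
      (((((DQ Da Da).sub (DQ Db Db)).sub DG).coord_mul 0).add
      (((DQ Da Db).const_mul 2).coord_mul 1)))
    ((((Da.mul Da).add (Du.mul Da0)).const_mul 2).add
      (Dec.add (((((DQ Da Da).sub (DQ Db Db)).sub DG).const_mul _).add
        ((((DQ' Da Da Da0 Da Da0).sub (DQ' Da Db Db0 Db Db0)).sub (Dg.mul Da)).coord_mul 0))
       ((((DQ Da Db).const_mul 2).const_mul _).add
        (((DQ' Da Da Da0 Db Db0).const_mul 2).coord_mul 1))))
  have K0 := ((((Da.mul Da).add (Du.mul Da0)).const_mul 2).add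
      (Dec.add (((((DQ Da Da).sub (DQ Db Db)).sub DG).const_mul (if (0 : Fin 2) = 0 then 1 else 0)).add
        ((((DQ' Da Da Da0 Da Da0).sub (DQ' Da Db Db0 Db Db0)).sub (Dg.mul Da)).coord_mul 0))
       ((((DQ Da Db).const_mul 2).const_mul (if (1 : Fin 2) = 0 then 1 else 0)).add
        (((DQ' Da Da Da0 Db Db0).const_mul 2).coord_mul 1)))).integrable
  have I1 := HP.integral
    (((hu1.mul hb1).const_mul 2).add
      (((HP.coord 1 1).mul (((HQ hu1 hb1 hb1).sub (HQ hu1 ha1 ha1)).sub (HG 1 b hu1))).add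
      ((HP.coord 1 0).mul ((HQ hu1 ha1 hb1).const_mul 2))))
    (((Du.mul Db).const_mul 2).add
      (((((DQ Db Db).sub (DQ Da Da)).sub DG).coord_mul 1).add
      (((DQ Da Db).const_mul 2).coord_mul 0)))
    ((((Db.mul Db).add (Du.mul Db1)).const_mul 2).add
      (Dec.add (((((DQ Db Db).sub (DQ Da Da)).sub DG).const_mul _).add
        ((((DQ' Db Db Db1 Db Db1).sub (DQ' Db Da Db0 Da Db0)).sub (Dg.mul Db)).coord_mul 1))
       ((((DQ Da Db).const_mul 2).const_mul _).add
        (((DQ' Db Da Db0 Db Db1).const_mul 2).coord_mul 0))))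
  have K1 := ((((Db.mul Db).add (Du.mul Db1)).const_mul 2).add
      (Dec.add (((((DQ Db Db).sub (DQ Da Da)).sub DG).const_mul (if (1 : Fin 2) = 1 then 1 else 0)).add
        ((((DQ' Db Db Db1 Db Db1).sub (DQ' Db Da Db0 Da Db0)).sub (Dg.mul Db)).coord_mul 1))
       ((((DQ Da Db).const_mul 2).const_mul (if (0 : Fin 2) = 1 then 1 else 0)).add
        (((DQ' Db Da Db0 Db Db1).const_mul 2).coord_mul 0)))).integrable
  have I := integral_add K0 K1
  rw [I0, I1, add_zero] at I
  have K := K0.add K1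
  have Kg : Integrable (gradsq u) := by
    have := ((Da.mul Da).add (Db.mul Db)).integrable
    refine this.congr (Filter.Eventually.of_forall fun x => ?_)
    simp only [gradsq, Fin.sum_univ_two, ← ha, ← hb]
    ring
  have KP := DP.integrable
  have key : ∃ W : E2 → ℝ, Integrable W ∧ ∫ x, W x = 0 ∧ ∀ x, W x = Lplus ω p u u x * u x
      + 2 * gradsq u x + ((p - 1) ^ 2 / (p + 1)) * u x ^ (p + 1) := by
    refine ⟨_, K, I, fun x => ?_⟩
    have hs := hsol x
    have e2 : (fun y => u y ^ 2) = fun y => u y * u y := by ext y; ring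
    have ep1 : u x ^ (p - 1) * u x = u x ^ p := by
      rw [Real.rpow_sub_one (hpos x).ne']; field_simp [(hpos x).ne']
    have ep2 : u x ^ (p + 1) = u x ^ p * u x := by
      rw [Real.rpow_add_one (hpos x).ne']
    have eL : Lplus ω p u u x * u x = (-lap u x - 3 * u x * lap (fun y => u y * u y) x
        + ω * u x) * u x - p * (u x ^ (p - 1) * u x) * u x := by
      simp only [Lplus, e2]; ring
    rw [eL, ep1]
    rw [e2] at hs
    have elap : lap u x = pd 0 a x + pd 1 b x := by
      simp only [lap, Fin.sum_univ_two, ← ha, ← hb]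
    have egr : gradsq u x = a x ^ 2 + b x ^ 2 := by
      simp only [gradsq, Fin.sum_univ_two, ← ha, ← hb]
    rw [lap_sq hsm, elap, egr] at hs
    rw [lap_sq hsm, elap, egr]
    simp only [Pi.add_apply, G, g, ep2, if_true, one_ne_zero, zero_ne_one, if_false, zero_mul,
      one_mul, zero_add]
    have hc : (p - 1) ^ 2 / (p + 1) = p - 3 + 2 * (2 / (p + 1)) := by
      field_simp; ring
    rw [hc]
    linear_combination (-2 * x 0 * a x - 2 * x 1 * b x - 3 * u x) * hs
  obtain ⟨W, hW, hW0, hWe⟩ := key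
  have eq : (∫ x, Lplus ω p u u x * u x)
      = -2 * (∫ x, gradsq u x) - ((p - 1) ^ 2 / (p + 1)) * ∫ x, u x ^ (p + 1) := by
    have h1 : ∀ x, Lplus ω p u u x * u x
        = (W x - 2 * gradsq u x) - ((p - 1) ^ 2 / (p + 1)) * u x ^ (p + 1) := fun x => by
      rw [hWe]; ring
    simp only [h1]
    have hWs : Integrable (fun x => W x - 2 * gradsq u x) := hW.sub (Kg.const_mul 2)
    rw [integral_sub hWs (KP.const_mul _),
      integral_sub hW (Kg.const_mul 2), integral_const_mul, integral_const_mul, hW0]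
    ring
  refine ⟨eq, ?_⟩
  rw [eq]
  have h1 : 0 ≤ ∫ x, gradsq u x := integral_nonneg fun x => by
    simp only [gradsq, Pi.zero_apply]; positivity
  have h2 : 0 < ∫ x, u x ^ (p + 1) := by
    rw [integral_pos_iff_support_of_nonneg (fun x => (Real.rpow_pos_of_pos (hpos x) _).le) KP]
    have : Function.support (fun x => u x ^ (p + 1)) = Set.univ := by
      ext x; simpa using (Real.rpow_pos_of_pos (hpos x) _).ne'
    rw [this]
    exact Measure.measure_univ_pos.mpr (NeZero.ne _)
  have h3 : 0 < (p - 1) ^ 2 / (p + 1) := by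
    have : 0 < p - 1 := by linarith
    have : 0 < p + 1 := by linarith
    positivity
  have := mul_pos h3 h2
  linarith

end
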